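/- For integers n and l with 0 ≤ l ≤ n − 2, the chromatic symmetric function of the tadpole T_{n−l, l} satisfies X_{T_{n−l, l}} = Σ_{I ⊨ n} Θ_I^+(l+1) · w_I · e_I. -/

import Mathlib

/-!
With finitely many colours, let `P_n`, `C_m` and `T_{m,l}` also stand for the chromatic functions
of these graphs. In a properly coloured path on `m + l + 1` vertices the vertices `0` and `m`
either differ, which gives a colouring of `T_{m+1,l}`, or agree. In the latter case the first `m`
vertices form a coloured cycle, and vertex `m` repeats the colour of its root; comparing with the
colourings of `C_m` together with a disjoint `P_{l+1}`, according to whether the first vertex of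
`P_{l+1}` has the colour of the root, gives (`tadSum_succ`)
`T_{m+1,l} = T_{m,l+1} + P_{m+l+1} - P_{l+1} C_m`,
and `T_{1,l} = 0`, a loop having no proper colouring.

The sums `F(n,a) = ∑ Θ_I^+(a) w_I e_I` over the compositions of `n` satisfy the same recursion:
`Θ_I^+(a) - Θ_I^+(a+1)` is `1`, except that it is `1 - k_1` when `I = JK` with `J` of size `a`, and
`k_1 w_{JK} = w_J (k_1 - 1) w_K`. Hence (`wTheta_sub`)
`F(n,a) - F(n,a+1) = ∑ w_I e_I - (∑ w_J e_J) F(n-a,1)`, and `F(n,n) = 0`.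
Once `P_n = ∑ w_I e_I` is known, induction on the length of the cycle gives the theorem.

The expansion of `P_n` (`pathTot_eq_wSum`) follows from `P(z) (E(z) - z E'(z)) = E(z)`, where
`E(z) = ∏ (1 + x_c z)`: the series `V(z)` of the sums of `∏ (i_j - 1) e_I` is the inverse of
`E(z) - z E'(z)`, and `∑ w_I e_I` has generating function `1 + z E'(z) V(z) = E(z) V(z)`.

The coefficient of a given monomial involves only finitely many variables, so that the statement
about formal power series reduces to finitely many colours (`coeff_csf`, `coeff_esymmProd`).
-/

open Finset

/-- Symmetric functions in countably many variables `x_0, x_1, x_2, …`, realized inside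
the ring of formal multivariate power series over `ℚ`. -/
abbrev SymF : Type := MvPowerSeries ℕ ℚ

open Classical in
/-- The elementary symmetric function `e_k`: the sum of all squarefree monomials of
degree `k` (so `e_0 = 1`). -/
noncomputable def esymm (k : ℕ) : SymF :=
  fun d : ℕ →₀ ℕ =>
    if (d.sum fun _ e => e) = k ∧ ∀ i, d i ≤ 1 then (1 : ℚ) else 0

/-- `e_I = e_{i_1} ⋯ e_{i_s}` for a list `I = [i_1, …, i_s]`. -/
noncomputable def esymmProd (I : List ℕ) : SymF := (I.map esymm).prod

open Classical in
/-- The chromatic symmetric function `X_G = Σ_κ ∏_v x_{κ v}`, summed over proper colorings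
`κ : V → ℕ`: the coefficient of the monomial with exponent vector `d` is the number of
proper colorings all of whose color fibres have the sizes recorded by `d`. -/
noncomputable def csf {V : Type} [Finite V] (G : SimpleGraph V) : SymF :=
  fun d : ℕ →₀ ℕ =>
    (({κ : V → ℕ | (∀ v w, G.Adj v w → κ v ≠ κ w) ∧
        ∀ i : ℕ, {v | κ v = i}.ncard = d i}).ncard : ℚ)

/-- `w_I = i_1 ∏_{j ≥ 2} (i_j - 1)`, with `w_ε = 1`. -/
def wC : List ℕ → ℕ
  | [] => 1
  | h :: t => h * (t.map (· - 1)).prod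

/-- `σ_I^+(a)`: the smallest prefix sum of `I` that is at least `a`. -/
noncomputable def sigmaPlus (I : List ℕ) (a : ℕ) : ℕ :=
  sInf {m | (∃ k ≤ I.length, (I.take k).sum = m) ∧ a ≤ m}

/-- `Θ_I^+(a) = σ_I^+(a) - a`. -/
noncomputable def thetaPlus (I : List ℕ) (a : ℕ) : ℕ := sigmaPlus I a - a

/-- The tadpole `T_{m,l}`: the cycle `C_m` on vertices `0, …, m-1` (consecutive edges
together with the edge `{0, m-1}`), whose vertex `m-1` is joined by an edge to one end of
the path `m, m+1, …, m+l-1` on `l` vertices. -/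
def tadpoleG (m l : ℕ) : SimpleGraph (Fin (m + l)) :=
  SimpleGraph.fromRel (fun i j =>
    (i : ℕ) + 1 = (j : ℕ) ∨ ((i : ℕ) = 0 ∧ (j : ℕ) = m - 1))

/-! ### Recursions for weighted paths and cycles -/

section Walks

variable {ι R : Type*} [Fintype ι] [DecidableEq ι] [CommRing R]

/-- Weighted count of the ways to extend a vertex coloured `c` by a properly coloured path on
`l` further vertices; the weight `x c` of the starting vertex is not included. -/
def pathTail (x : ι → R) : ℕ → ι → R
  | 0, _ => 1
  | l + 1, c => ∑ d, if c = d then 0 else x d * pathTail x l d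

/-- The chromatic function of the path `P_n` in the variables `x`, with value `1` at `n = 0`. -/
def pathTot (x : ι → R) : ℕ → R
  | 0 => 1
  | l + 1 => ∑ d, x d * pathTail x l d

/-- Weighted count of the proper colourings of the path on `k + 1` vertices whose first vertex
is coloured `a` and whose last vertex is coloured `c`. -/
def pathEnds (x : ι → R) : ℕ → ι → ι → R
  | 0, a, c => if a = c then x c else 0
  | k + 1, a, c => x c * ∑ d, if d = c then 0 else pathEnds x k a d

/-- The chromatic function of the tadpole `T_{k+1,l}` in the variables `x`, arranged by the
colours `a`, `c` of the two ends of the path obtained by cutting the closing edge of the cycle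
(`c` being the colour of the vertex that carries the tail). It vanishes for `k = 0`, where the
cycle is a loop. -/
def tadSum (x : ι → R) (k l : ℕ) : R :=
  ∑ a, ∑ c, if a = c then 0 else pathEnds x k a c * pathTail x l c

lemma sum_ite_ne (c : ι) (f : ι → R) :
    (∑ d, if c = d then 0 else f d) = ∑ d, f d - f c := by
  have h : ∀ d, (if c = d then 0 else f d) = f d - (if c = d then f d else 0) := by
    intro d; split_ifs <;> simp
  simp [h, Finset.sum_sub_distrib]

lemma sum_ite_ne' (c : ι) (f : ι → R) :
    (∑ d, if d = c then 0 else f d) = ∑ d, f d - f c := by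
  simpa [eq_comm] using sum_ite_ne c f

lemma pathTail_succ (x : ι → R) (l : ℕ) (c : ι) :
    pathTail x (l + 1) c = pathTot x (l + 1) - x c * pathTail x l c := by
  rw [pathTail, sum_ite_ne, pathTot]

/-- Splitting a path at an intermediate vertex. -/
lemma sum_pathEnds_mul_pathTail (x : ι → R) (k l : ℕ) (a : ι) :
    ∑ c, pathEnds x k a c * pathTail x l c = x a * pathTail x (k + l) a := by
  induction k generalizing l with
  | zero => simp [pathEnds]
  | succ k ih =>
    have : k + 1 + l = k + (l + 1) := by ring
    rw [this, ← ih (l + 1)]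
    simp only [pathEnds, pathTail, Finset.mul_sum, Finset.sum_mul]
    rw [Finset.sum_comm]
    refine Finset.sum_congr rfl fun d _ => Finset.sum_congr rfl fun c _ => ?_
    split_ifs <;> ring

/-- `pathEnds` also satisfies the recursion that removes the first vertex. -/
lemma pathEnds_succ' (x : ι → R) (k : ℕ) (a c : ι) :
    pathEnds x (k + 1) a c = x a * ∑ d, if d = a then 0 else pathEnds x k d c := by
  induction k generalizing a c with
  | zero =>
    simp only [pathEnds, sum_ite_ne']
    by_cases h : a = c
    · subst h; simp
    · simp [h, mul_comm]
  | succ k ih =>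
    conv_rhs => simp only [pathEnds]
    conv_lhs =>
      rw [pathEnds]
      simp only [ih]
    simp only [Finset.mul_sum]
    have h1 : ∀ d, (if d = c then 0 else ∑ i, x a * if i = a then 0 else pathEnds x k i d) =
        ∑ i, if d = c then 0 else x a * if i = a then 0 else pathEnds x k i d := by
      intro d; split_ifs <;> simp
    have h2 : ∀ d, (if d = a then 0 else ∑ i, x c * if i = c then 0 else pathEnds x k d i) =
        ∑ i, if d = a then 0 else x c * if i = c then 0 else pathEnds x k d i := by
      intro d; split_ifs <;> simp
    simp only [h1, h2, Finset.mul_sum]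
    rw [Finset.sum_comm]
    refine Finset.sum_congr rfl fun d _ => Finset.sum_congr rfl fun e _ => ?_
    split_ifs <;> ring

/-- Reversing a path. -/
lemma pathEnds_comm (x : ι → R) (k : ℕ) (a c : ι) : pathEnds x k a c = pathEnds x k c a := by
  induction k generalizing a c with
  | zero =>
    by_cases h : a = c
    · subst h; rfl
    · simp [pathEnds, h, Ne.symm h]
  | succ k ih =>
    rw [pathEnds_succ', pathEnds]
    simp only [fun d => ih d c]

/-- `T_{1,l}` contains a loop and so has no proper colourings. -/
lemma tadSum_zero (x : ι → R) (l : ℕ) : tadSum x 0 l = 0 := by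
  refine Finset.sum_eq_zero fun a _ => Finset.sum_eq_zero fun c _ => ?_
  by_cases h : a = c <;> simp [h, pathEnds]

/-- The relation `X_{T_{m+1,l}} = X_{T_{m,l+1}} + X_{P_{m+l+1}} - X_{P_{l+1}} X_{C_m}`, with
`m = k + 1`. -/
lemma tadSum_succ (x : ι → R) (k l : ℕ) :
    tadSum x (k + 1) l =
      tadSum x k (l + 1) + pathTot x (k + l + 2) - pathTot x (l + 1) * tadSum x k 0 := by
  -- `Q` is the part of the path sum on `m + l + 1` vertices in which the vertices `0` and `m`
  -- share their colour: identifying them closes the first `m` vertices up to a cycle.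
  set Q : R := ∑ a, ∑ c, if a = c then 0 else pathEnds x k a c * (x c * pathTail x l c) with hQ
  have h1 : tadSum x k (l + 1) = pathTot x (l + 1) * tadSum x k 0 - Q := by
    simp only [tadSum, hQ, Finset.mul_sum, ← Finset.sum_sub_distrib]
    refine Finset.sum_congr rfl fun a _ => Finset.sum_congr rfl fun c _ => ?_
    split_ifs
    · ring
    · rw [pathTail_succ, pathTail]; ring
  have h2 : tadSum x (k + 1) l = pathTot x (k + l + 2) - Q := by
    simp only [tadSum, sum_ite_ne, sum_pathEnds_mul_pathTail, Finset.sum_sub_distrib]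
    congr 1
    · rw [pathTot, show k + l + 1 = k + 1 + l by ring]
    · rw [hQ, Finset.sum_comm]
      refine Finset.sum_congr rfl fun c _ => ?_
      rw [pathEnds, Finset.mul_sum, Finset.sum_mul]
      refine Finset.sum_congr rfl fun a _ => ?_
      rw [pathEnds_comm x k a c]
      split_ifs <;> ring
  rw [h1, h2]; ring

end Walks

/-! ### Colourings of the tadpole -/

section Colourings

variable {ι R : Type*} [CommRing R]

/-- Consecutive vertices receive different colours. -/
def PathProper {n : ℕ} (κ : Fin n → ι) : Prop :=
  ∀ i (h : i + 1 < n), κ ⟨i, by omega⟩ ≠ κ ⟨i + 1, h⟩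

open Classical in
/-- The weight of a colouring of the path, `0` for an improper one. -/
noncomputable def pathWt (x : ι → R) {n : ℕ} (κ : Fin n → ι) : R :=
  if PathProper κ then ∏ i, x (κ i) else 0

lemma snoc_mk {n : ℕ} (κ : Fin n → ι) (d : ι) (i : ℕ) (h : i < n) (h' : i < n + 1) :
    (Fin.snoc κ d : Fin (n + 1) → ι) ⟨i, h'⟩ = κ ⟨i, h⟩ := by
  simp [Fin.snoc, h]

lemma snoc_mk_last {n : ℕ} (κ : Fin n → ι) (d : ι) (h' : n < n + 1) :
    (Fin.snoc κ d : Fin (n + 1) → ι) ⟨n, h'⟩ = d := by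
  simp [Fin.snoc]

lemma pathProper_snoc {n : ℕ} (hn : 0 < n) (κ : Fin n → ι) (d : ι) :
    PathProper (Fin.snoc κ d : Fin (n + 1) → ι) ↔ PathProper κ ∧ κ ⟨n - 1, by omega⟩ ≠ d := by
  constructor
  · intro h
    refine ⟨fun i hi => ?_, ?_⟩
    · have := h i (by omega)
      rwa [snoc_mk κ d i (by omega), snoc_mk κ d (i + 1) hi] at this
    · have := h (n - 1) (by omega)
      rw [snoc_mk κ d (n - 1) (by omega)] at this
      simpa [Nat.sub_add_cancel hn, snoc_mk_last] using this
  · rintro ⟨h1, h2⟩ i hi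
    rw [snoc_mk κ d i (by omega)]
    by_cases hi' : i + 1 < n
    · rw [snoc_mk κ d (i + 1) hi']
      exact h1 i hi'
    · obtain rfl : n = i + 1 := by omega
      rw [snoc_mk_last]
      exact h2

lemma pathWt_snoc [DecidableEq ι] (x : ι → R) {n : ℕ} (hn : 0 < n) (κ : Fin n → ι) (d : ι) :
    pathWt x (Fin.snoc κ d : Fin (n + 1) → ι) =
      pathWt x κ * if κ ⟨n - 1, by omega⟩ = d then 0 else x d := by
  unfold pathWt
  have hp := pathProper_snoc hn κ d
  simp only [Fin.prod_univ_castSucc, Fin.snoc_castSucc, Fin.snoc_last]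
  by_cases h1 : PathProper κ <;> by_cases h2 : κ ⟨n - 1, by omega⟩ = d <;>
    simp [h1, h2, hp]

variable [Fintype ι] [DecidableEq ι]

/-- Summing over the colour of the last vertex first. -/
lemma sum_pathWt_succ (x : ι → R) {n : ℕ} (hn : 0 < n) (Ψ : (Fin (n + 1) → ι) → R) :
    ∑ κ, pathWt x κ * Ψ κ =
      ∑ κ : Fin n → ι, pathWt x κ *
        ∑ d, if κ ⟨n - 1, by omega⟩ = d then 0 else x d * Ψ (Fin.snoc κ d) := by
  rw [← (Fin.snocEquiv fun _ => ι).sum_comp, Fintype.sum_prod_type, Finset.sum_comm]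
  refine Finset.sum_congr rfl fun κ _ => ?_
  rw [Finset.mul_sum]
  refine Finset.sum_congr rfl fun d _ => ?_
  change pathWt x (Fin.snoc κ d : Fin (n + 1) → ι) * Ψ (Fin.snoc κ d) = _
  rw [pathWt_snoc x hn]
  split_ifs <;> ring

/-- Removing the tail of the tadpole. -/
lemma sum_tail (x : ι → R) (k l : ℕ) (j : ℕ) :
    ∑ κ : Fin (k + 1 + l) → ι, pathWt x κ *
        (if κ ⟨0, by omega⟩ = κ ⟨k, by omega⟩ then 0 else pathTail x j (κ ⟨k + l, by omega⟩)) =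
      ∑ κ : Fin (k + 1) → ι, pathWt x κ *
        (if κ ⟨0, by omega⟩ = κ ⟨k, by omega⟩ then 0 else
          pathTail x (j + l) (κ ⟨k, by omega⟩)) := by
  induction l generalizing j with
  | zero => rfl
  | succ l ih =>
    have := ih (j + 1)
    rw [show j + (l + 1) = j + 1 + l by ring, ← this]
    refine (sum_pathWt_succ x (n := k + 1 + l) (by omega) _).trans ?_
    refine Finset.sum_congr rfl fun κ _ => ?_
    congr 1
    have e1 : ∀ d, (Fin.snoc κ d : Fin (k + 1 + l + 1) → ι) ⟨k + (l + 1), by omega⟩ = d := by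
      intro d
      have : (⟨k + (l + 1), by omega⟩ : Fin (k + 1 + l + 1)) = ⟨k + 1 + l, by omega⟩ := by
        ext; simp only; ring
      rw [this, snoc_mk_last]
    have e2 : (⟨k + 1 + l - 1, by omega⟩ : Fin (k + 1 + l)) = ⟨k + l, by omega⟩ := by
      ext; simp only; omega
    simp only [snoc_mk κ _ 0 (by omega : 0 < k + 1 + l),
      snoc_mk κ _ k (by omega : k < k + 1 + l), e1, e2]
    split_ifs with h
    · simp
    · rw [pathTail]

/-- Summation by the colours of the two end vertices of a path. -/
lemma sum_ends (x : ι → R) (k : ℕ) (B : ι → ι → R) :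
    ∑ κ : Fin (k + 1) → ι, pathWt x κ * B (κ ⟨0, by omega⟩) (κ ⟨k, by omega⟩) =
      ∑ a, ∑ c, pathEnds x k a c * B a c := by
  induction k generalizing B with
  | zero =>
    rw [← (Equiv.funUnique (Fin 1) ι).symm.sum_comp]
    simp [pathEnds, pathWt, PathProper]
  | succ k ih =>
    refine (sum_pathWt_succ x (n := k + 1) (by omega) _).trans ?_
    simp only [snoc_mk _ _ 0 (by omega : 0 < k + 1), snoc_mk_last, Nat.add_sub_cancel]
    rw [ih fun a c => ∑ d, if c = d then 0 else x d * B a d]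
    refine Finset.sum_congr rfl fun a _ => ?_
    simp only [pathEnds, Finset.mul_sum, Finset.sum_mul]
    rw [Finset.sum_comm]
    refine Finset.sum_congr rfl fun d _ => Finset.sum_congr rfl fun c _ => ?_
    split_ifs <;> ring

/-- `tadSum` is the sum of the weights of the proper colourings of the tadpole. -/
lemma sum_tadpole (x : ι → R) (k l : ℕ) :
    ∑ κ : Fin (k + 1 + l) → ι,
        (if κ ⟨0, by omega⟩ = κ ⟨k, by omega⟩ then 0 else pathWt x κ) = tadSum x k l := by
  have h1 := sum_tail x k l 0
  have h2 := sum_ends x k fun a c => if a = c then 0 else pathTail x (0 + l) c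
  rw [tadSum]
  simp only [pathTail, mul_ite, mul_zero, mul_one, zero_add] at h1 h2
  exact h1.trans h2

end Colourings

/-! ### Compositions and the function `Θ` -/

section ThetaRec

lemma thetaPlus_nil (a : ℕ) : thetaPlus [] a = 0 := by
  have : sigmaPlus [] a = 0 := by
    unfold sigmaPlus
    rw [Nat.sInf_eq_zero]
    rcases Nat.eq_zero_or_pos a with h | h
    · left; simp [h]
    · right
      ext m
      simp only [List.take_nil, List.sum_nil, Set.mem_ofPred_eq, Set.mem_empty_iff_false, iff_false]
      rintro ⟨⟨_, _, rfl⟩, h2⟩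
      omega
  simp [thetaPlus, this]

/-- Stripping the first part of a composition; no bound on `a` is needed, since both sides
vanish when `a` exceeds the size. -/
lemma thetaPlus_cons (h : ℕ) (t : List ℕ) (a : ℕ) (ha : 0 < a) :
    thetaPlus (h :: t) a = if a ≤ h then h - a else thetaPlus t (a - h) := by
  have hset : ∀ m, m ∈ {m | (∃ k ≤ (h :: t).length, ((h :: t).take k).sum = m) ∧ a ≤ m} ↔
      ∃ k ≤ t.length, h + (t.take k).sum = m ∧ a ≤ m := by
    intro m
    constructor
    · rintro ⟨⟨k, hk, rfl⟩, h2⟩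
      cases k with
      | zero => simp at h2; omega
      | succ k => exact ⟨k, by simpa using hk, by simp, h2⟩
    · rintro ⟨k, hk, rfl, h2⟩
      exact ⟨⟨k + 1, by simpa using hk, by simp⟩, h2⟩
  split_ifs with hah
  · have : sigmaPlus (h :: t) a = h := by
      unfold sigmaPlus
      apply le_antisymm
      · exact Nat.sInf_le ((hset h).2 ⟨0, by simp, by simp, hah⟩)
      · refine le_csInf ⟨h, (hset h).2 ⟨0, by simp, by simp, hah⟩⟩ fun m hm => ?_
        obtain ⟨k, _, rfl, _⟩ := (hset m).1 hm
        omega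
    rw [thetaPlus, this]
  · set A := {m | (∃ k ≤ t.length, (t.take k).sum = m) ∧ a - h ≤ m} with hA
    have hset' : {m | (∃ k ≤ (h :: t).length, ((h :: t).take k).sum = m) ∧ a ≤ m} =
        (fun m => h + m) '' A := by
      ext m
      rw [hset]
      constructor
      · rintro ⟨k, hk, rfl, h2⟩
        exact ⟨_, ⟨⟨k, hk, rfl⟩, by omega⟩, rfl⟩
      · rintro ⟨_, ⟨⟨k, hk, rfl⟩, h2⟩, rfl⟩
        exact ⟨k, hk, rfl, by simp only; omega⟩
    unfold thetaPlus sigmaPlus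
    rw [hset', ← hA]
    rcases A.eq_empty_or_nonempty with he | hne
    · simp [he]
    · have : sInf ((fun m => h + m) '' A) = h + sInf A := by
        apply le_antisymm
        · exact Nat.sInf_le ⟨_, Nat.sInf_mem hne, rfl⟩
        · refine le_csInf (hne.image _) ?_
          rintro _ ⟨m, hm, rfl⟩
          have := Nat.sInf_le hm
          simp only; omega
      rw [this]; omega

end ThetaRec

section Compositions

variable {R : Type*} [CommRing R]

/-- Summing over the compositions of `n + 1` by their first part `i + 1`. -/
lemma sum_composition_succ {M : Type*} [AddCommMonoid M] (n : ℕ) (f : List ℕ → M) :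
    ∑ I : Composition (n + 1), f I.blocks =
      ∑ i : Fin (n + 1), ∑ J : Composition (n - i), f ((i + 1 : ℕ) :: J.blocks) := by
  rw [← Fintype.sum_sigma' fun (i : Fin (n + 1)) (J : Composition (n - i)) =>
    f ((i + 1 : ℕ) :: J.blocks)]
  let F : (Σ i : Fin (n + 1), Composition (n - i)) → Composition (n + 1) := fun p =>
    ⟨(p.1 + 1 : ℕ) :: p.2.blocks, by
      intro j hj
      rcases List.mem_cons.1 hj with rfl | hj
      · omega
      · exact p.2.blocks_pos hj, by
      have := p.1.2
      rw [List.sum_cons, p.2.blocks_sum]; omega⟩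
  have hF : Function.Bijective F := by
    constructor
    · rintro ⟨i, J⟩ ⟨i', J'⟩ h
      have h1 : (i + 1 : ℕ) :: J.blocks = (i' + 1 : ℕ) :: J'.blocks := congrArg (·.blocks) h
      simp only [List.cons.injEq, Nat.add_right_cancel_iff] at h1
      obtain rfl : i = i' := Fin.ext h1.1
      obtain rfl : J = J' := Composition.ext h1.2
      rfl
    · rintro ⟨bs, hpos, hsum⟩
      cases bs with
      | nil => simp at hsum
      | cons b t =>
        have hb : 0 < b := hpos (by simp)
        rw [List.sum_cons] at hsum
        refine ⟨⟨⟨b - 1, by omega⟩, ⟨t, fun hj => hpos (by simp [hj]), by simp only; omega⟩⟩, ?_⟩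
        apply Composition.ext
        simp only [F, List.cons.injEq, and_true]
        omega
  exact (hF.sum_comp fun I : Composition (n + 1) => f I.blocks).symm

lemma sum_composition_zero {M : Type*} [AddCommMonoid M] (f : List ℕ → M) :
    ∑ I : Composition 0, f I.blocks = f [] := by
  have h : ∀ I : Composition 0, I.blocks = [] := by
    intro I
    by_contra hne
    obtain ⟨b, t, hbt⟩ := List.exists_cons_of_ne_nil hne
    have h1 := I.blocks_sum
    have h2 : 0 < b := I.blocks_pos (by simp [hbt])
    rw [hbt, List.sum_cons] at h1
    omega
  simp [h, composition_card]

/-- The weight `∏ (i_j - 1)` of a composition, all of whose parts are treated alike. -/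
def vC (I : List ℕ) : ℕ := (I.map (· - 1)).prod

/-- The sum of `vC I * e_I` over the compositions of `n`. -/
def vSum (e : ℕ → R) (n : ℕ) : R := ∑ I : Composition n, (vC I.blocks : R) * (I.blocks.map e).prod

/-- The sum of `w_I * e_I` over the compositions of `n`. -/
def wSum (e : ℕ → R) (n : ℕ) : R := ∑ I : Composition n, (wC I.blocks : R) * (I.blocks.map e).prod

/-- The sum of `Θ_I^+(a) * vC I * e_I` over the compositions of `n`. -/
noncomputable def vTheta (e : ℕ → R) (n a : ℕ) : R :=
  ∑ I : Composition n, ((thetaPlus I.blocks a * vC I.blocks : ℕ) : R) * (I.blocks.map e).prod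

/-- The sum of `Θ_I^+(a) * w_I * e_I` over the compositions of `n`. -/
noncomputable def wTheta (e : ℕ → R) (n a : ℕ) : R :=
  ∑ I : Composition n, ((thetaPlus I.blocks a * wC I.blocks : ℕ) : R) * (I.blocks.map e).prod

lemma vSum_zero (e : ℕ → R) : vSum e 0 = 1 := by
  rw [vSum, sum_composition_zero fun I => (vC I : R) * (I.map e).prod]; simp [vC]

lemma wSum_zero (e : ℕ → R) : wSum e 0 = 1 := by
  rw [wSum, sum_composition_zero fun I => (wC I : R) * (I.map e).prod]; simp [wC]

lemma vSum_succ (e : ℕ → R) (n : ℕ) :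
    vSum e (n + 1) = ∑ i : Fin (n + 1), (i : ℕ) * e (i + 1) * vSum e (n - i) := by
  rw [vSum, sum_composition_succ n fun I => (vC I : R) * (I.map e).prod]
  refine Finset.sum_congr rfl fun i _ => ?_
  rw [vSum, Finset.mul_sum]
  refine Finset.sum_congr rfl fun J _ => ?_
  simp [vC]; ring

lemma wSum_succ (e : ℕ → R) (n : ℕ) :
    wSum e (n + 1) = ∑ i : Fin (n + 1), ((i : ℕ) + 1) * e (i + 1) * vSum e (n - i) := by
  rw [wSum, sum_composition_succ n fun I => (wC I : R) * (I.map e).prod]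
  refine Finset.sum_congr rfl fun i _ => ?_
  rw [vSum, Finset.mul_sum]
  refine Finset.sum_congr rfl fun J _ => ?_
  simp [vC, wC]; ring

/-- The contribution to `vTheta` and `wTheta` of the compositions of `n + 1` with first part
`i + 1`, up to the factor coming from that part. -/
noncomputable def tailTheta (e : ℕ → R) (n a i : ℕ) : R :=
  if a ≤ i + 1 then ((i + 1 - a : ℕ) : R) * vSum e (n - i) else vTheta e (n - i) (a - (i + 1))

lemma tailTheta_eq (e : ℕ → R) (n a i : ℕ) (ha : 0 < a) :
    tailTheta e n a i = ∑ J : Composition (n - i),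
      ((thetaPlus ((i + 1) :: J.blocks) a * vC J.blocks : ℕ) : R) * (J.blocks.map e).prod := by
  simp only [thetaPlus_cons _ _ a ha, tailTheta]
  split_ifs with h
  · rw [vSum, Finset.mul_sum]
    refine Finset.sum_congr rfl fun J _ => ?_
    push_cast; ring
  · rfl

lemma vTheta_succ (e : ℕ → R) (n a : ℕ) (ha : 0 < a) :
    vTheta e (n + 1) a = ∑ i : Fin (n + 1), (i : ℕ) * e (i + 1) * tailTheta e n a i := by
  rw [vTheta, sum_composition_succ n fun I =>
    ((thetaPlus I a * vC I : ℕ) : R) * (I.map e).prod]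
  refine Finset.sum_congr rfl fun i _ => ?_
  rw [tailTheta_eq e n a i ha, Finset.mul_sum]
  refine Finset.sum_congr rfl fun J _ => ?_
  simp [vC]; ring

lemma wTheta_succ (e : ℕ → R) (n a : ℕ) (ha : 0 < a) :
    wTheta e (n + 1) a = ∑ i : Fin (n + 1), ((i : ℕ) + 1) * e (i + 1) * tailTheta e n a i := by
  rw [wTheta, sum_composition_succ n fun I =>
    ((thetaPlus I a * wC I : ℕ) : R) * (I.map e).prod]
  refine Finset.sum_congr rfl fun i _ => ?_
  rw [tailTheta_eq e n a i ha, Finset.mul_sum]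
  refine Finset.sum_congr rfl fun J _ => ?_
  simp [vC, wC]; ring

/-- `∑ (i_1 - 1) w_I e_I` (which is the chromatic function of a cycle) in terms of the weight
`vC`: the two expressions for `∑ i_1 (i_1 - 1) ⋯ (i_s - 1) e_I`. -/
lemma vTheta_one (e : ℕ → R) (m : ℕ) (hm : 0 < m) :
    vTheta e m 1 + vSum e m = wTheta e m 1 := by
  obtain ⟨n, rfl⟩ : ∃ n, m = n + 1 := ⟨m - 1, by omega⟩
  rw [vTheta_succ e n 1 one_pos, wTheta_succ e n 1 one_pos, vSum_succ, ← Finset.sum_add_distrib]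
  refine Finset.sum_congr rfl fun i _ => ?_
  have : tailTheta e n 1 i = (i : ℕ) * vSum e (n - i) := by simp [tailTheta]
  rw [this]; ring

/-- The summand for the first part `i + 1` in the difference formula below. -/
lemma tailTheta_sub (e : ℕ → R) (n a i : ℕ) (ha : 0 < a) (han : a < n + 1)
    (ih : ∀ m < n + 1, ∀ b, 0 < b → b < m →
      vTheta e m b - vTheta e m (b + 1) = vSum e m - vSum e b * wTheta e (m - b) 1) :
    tailTheta e n a i - tailTheta e n (a + 1) i = vSum e (n - i) -
      if i < a then vSum e (a - 1 - i) * wTheta e (n + 1 - a) 1 else 0 := by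
  unfold tailTheta
  rcases lt_trichotomy a (i + 1) with h | h | h
  · rw [if_pos h.le, if_pos (by omega), if_neg (by omega), Nat.cast_sub h.le,
      Nat.cast_sub (by omega)]
    push_cast; ring
  · subst h
    have h1 : i + 1 + 1 - (i + 1) = 1 := by omega
    have h2 : i + 1 - 1 - i = 0 := by omega
    have h3 : n + 1 - (i + 1) = n - i := by omega
    rw [if_pos le_rfl, if_neg (by omega), if_pos (by omega), h1, h2, h3, vSum_zero,
      ← vTheta_one e (n - i) (by omega)]
    simp
  · have h1 : a + 1 - (i + 1) = a - (i + 1) + 1 := by omega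
    have h2 : a - 1 - i = a - (i + 1) := by omega
    have h3 : n - i - (a - (i + 1)) = n + 1 - a := by omega
    rw [if_neg (by omega), if_neg (by omega), if_pos (by omega), h1, h2,
      ih (n - i) (by omega) (a - (i + 1)) (by omega) (by omega), h3]

lemma sum_tailTheta_sub (e c : ℕ → R) (n a : ℕ) (han : a < n + 1) (C : R) :
    ∑ i : Fin (n + 1), c i * (vSum e (n - i) - if (i : ℕ) < a then vSum e (a - 1 - i) * C else 0) =
      ∑ i : Fin (n + 1), c i * vSum e (n - i) - (∑ i : Fin a, c i * vSum e (a - 1 - i)) * C := by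
  simp only [mul_sub, Finset.sum_sub_distrib]
  congr 1
  rw [Fin.sum_univ_eq_sum_range fun i => c i * if i < a then vSum e (a - 1 - i) * C else 0,
    Fin.sum_univ_eq_sum_range fun i => c i * vSum e (a - 1 - i), Finset.sum_mul]
  symm
  refine Finset.sum_subset_zero_on_sdiff (Finset.range_mono han.le) ?_ ?_
  · intro i hi
    simp only [Finset.mem_sdiff, Finset.mem_range] at hi
    rw [if_neg hi.2, mul_zero]
  · intro i hi
    rw [if_pos (Finset.mem_range.1 hi)]; ring

/-- `Θ_I^+(a) - Θ_I^+(a + 1)` is `1`, unless some prefix `J` of `I = JK` has sum `a`, and then it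
is `1 - k_1`; hence the product on the right-hand side. -/
lemma vTheta_sub (e : ℕ → R) (n a : ℕ) (ha : 0 < a) (han : a < n) :
    vTheta e n a - vTheta e n (a + 1) = vSum e n - vSum e a * wTheta e (n - a) 1 := by
  induction n using Nat.strong_induction_on generalizing a with
  | _ n ih =>
    obtain ⟨n, rfl⟩ : ∃ k, n = k + 1 := ⟨n - 1, by omega⟩
    obtain ⟨b, rfl⟩ : ∃ b, a = b + 1 := ⟨a - 1, by omega⟩
    rw [vTheta_succ e n _ ha, vTheta_succ e n _ (by omega), ← Finset.sum_sub_distrib, vSum_succ,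
      vSum_succ]
    simp only [← mul_sub, tailTheta_sub e n (b + 1) _ ha han fun m hm b hb hbm => ih m hm b hb hbm]
    exact sum_tailTheta_sub e (fun i => (i : R) * e (i + 1)) n (b + 1) han _

lemma wTheta_sub (e : ℕ → R) (n a : ℕ) (ha : 0 < a) (han : a < n) :
    wTheta e n a - wTheta e n (a + 1) = wSum e n - wSum e a * wTheta e (n - a) 1 := by
  obtain ⟨n, rfl⟩ : ∃ k, n = k + 1 := ⟨n - 1, by omega⟩
  obtain ⟨b, rfl⟩ : ∃ b, a = b + 1 := ⟨a - 1, by omega⟩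
  rw [wTheta_succ e n _ ha, wTheta_succ e n _ (by omega), ← Finset.sum_sub_distrib, wSum_succ,
    wSum_succ]
  simp only [← mul_sub, tailTheta_sub e n (b + 1) _ ha han fun m _ b hb hbm =>
    vTheta_sub e m b hb hbm]
  exact sum_tailTheta_sub e (fun i => ((i : R) + 1) * e (i + 1)) n (b + 1) han _

lemma vTheta_self (e : ℕ → R) (n : ℕ) : vTheta e n n = 0 := by
  induction n using Nat.strong_induction_on with
  | _ n ih =>
    rcases n with _ | n
    · rw [vTheta, sum_composition_zero fun I =>
        ((thetaPlus I 0 * vC I : ℕ) : R) * (I.map e).prod]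
      simp [thetaPlus_nil]
    · rw [vTheta_succ e n _ (by omega)]
      refine Finset.sum_eq_zero fun i _ => ?_
      have : tailTheta e n (n + 1) i = 0 := by
        unfold tailTheta
        split_ifs with h
        · simp [show (i : ℕ) + 1 - (n + 1) = 0 by omega]
        · rw [show n + 1 - ((i : ℕ) + 1) = n - i by omega, ih _ (by omega)]
      rw [this, mul_zero]

lemma wTheta_self (e : ℕ → R) (n : ℕ) : wTheta e (n + 1) (n + 1) = 0 := by
  rw [wTheta_succ e n _ (by omega)]
  refine Finset.sum_eq_zero fun i _ => ?_
  have : tailTheta e n (n + 1) i = 0 := by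
    unfold tailTheta
    split_ifs with h
    · simp [show (i : ℕ) + 1 - (n + 1) = 0 by omega]
    · rw [show n + 1 - ((i : ℕ) + 1) = n - i by omega, vTheta_self]
  rw [this, mul_zero]

end Compositions

/-! ### The generating function of paths -/

section Paths

variable {ι R : Type*} [Fintype ι] [CommRing R]

/-- The polynomial `∏ (1 + x_c z)`, whose coefficients are the elementary symmetric functions
of the `x_c`. -/
noncomputable def ePoly (x : ι → R) : Polynomial R := ∏ c, (1 + Polynomial.C (x c) * Polynomial.X)

/-- The elementary symmetric functions of the family `x`. -/
noncomputable def eFin (x : ι → R) (k : ℕ) : R := (ePoly x).coeff k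

lemma eFin_eq (x : ι → R) (k : ℕ) :
    eFin x k = ∑ t : Finset ι, if t.card = k then ∏ c ∈ t, x c else 0 := by
  unfold eFin ePoly
  rw [Finset.prod_one_add, Finset.powerset_univ, Polynomial.finsetSum_coeff]
  refine Finset.sum_congr rfl fun t _ => ?_
  rw [Finset.prod_mul_distrib, Finset.prod_const, ← map_prod, Polynomial.coeff_C_mul_X_pow]
  simp [eq_comm]

lemma eFin_zero (x : ι → R) : eFin x 0 = 1 := by
  simp [eFin, ePoly, Polynomial.coeff_zero_eq_eval_zero, Polynomial.eval_prod]

open PowerSeries in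
lemma coeff_X_derivative (x : ι → R) (n : ℕ) :
    coeff n (X * (Polynomial.derivative (ePoly x) : R⟦X⟧)) = n * eFin x n := by
  rcases n with _ | n
  · simp
  · rw [coeff_succ_X_mul, Polynomial.coeff_coe, Polynomial.coeff_derivative, eFin]
    push_cast; ring

variable [DecidableEq ι]

open PowerSeries in
/-- The generating function identity `P(z) (E(z) - z E'(z)) = E(z)` for paths. -/
lemma pathTot_mul (x : ι → R) :
    PowerSeries.mk (pathTot x) * ((ePoly x : R⟦X⟧) - X * (Polynomial.derivative (ePoly x) : R⟦X⟧)) =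
      (ePoly x : R⟦X⟧) := by
  have h1 : ∀ c, PowerSeries.mk (fun l => pathTail x l c) * (1 + C (x c) * X) =
      PowerSeries.mk (pathTot x) := by
    intro c
    ext n
    rcases n with _ | n
    · simp [pathTail, pathTot]
    · rw [mul_add, mul_one, map_add, mul_comm (C (x c)) X, ← mul_assoc, coeff_mul_C,
        coeff_succ_mul_X]
      simp only [coeff_mk]
      rw [pathTail_succ]; ring
  have h2 : PowerSeries.mk (pathTot x) =
      1 + X * ∑ c, C (x c) * PowerSeries.mk (fun l => pathTail x l c) := by
    ext n
    rcases n with _ | n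
    · simp [pathTot]
    · rw [map_add, coeff_succ_X_mul, map_sum]
      simp [pathTot, coeff_one]
  have hcoe : ∀ s : Finset ι,
      ((∏ c ∈ s, (1 + Polynomial.C (x c) * Polynomial.X) : Polynomial R) : R⟦X⟧) =
        ∏ c ∈ s, (1 + C (x c) * X) := by
    intro s
    rw [← Polynomial.coeToPowerSeries.ringHom_apply, map_prod]
    simp
  have hE : (ePoly x : R⟦X⟧) = ∏ c, (1 + C (x c) * X) := hcoe _
  have hE' : (Polynomial.derivative (ePoly x) : R⟦X⟧) =
      ∑ c, (∏ d ∈ Finset.univ.erase c, (1 + C (x d) * X)) * C (x c) := by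
    rw [ePoly, Polynomial.derivative_prod_finset, ← Polynomial.coeToPowerSeries.ringHom_apply,
      map_sum]
    simp [hcoe]
  have h3 : PowerSeries.mk (pathTot x) * (Polynomial.derivative (ePoly x) : R⟦X⟧) =
      (∑ c, C (x c) * PowerSeries.mk (fun l => pathTail x l c)) * (ePoly x : R⟦X⟧) := by
    rw [hE', hE, Finset.mul_sum, Finset.sum_mul]
    refine Finset.sum_congr rfl fun c _ => ?_
    rw [← Finset.mul_prod_erase Finset.univ (fun c => 1 + C (x c) * X) (Finset.mem_univ c),
      ← h1 c]
    ring
  calc _ = PowerSeries.mk (pathTot x) * (ePoly x : R⟦X⟧) -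
        X * (PowerSeries.mk (pathTot x) * (Polynomial.derivative (ePoly x) : R⟦X⟧)) := by ring
    _ = (PowerSeries.mk (pathTot x) - X * ∑ c, C (x c) * PowerSeries.mk (fun l => pathTail x l c)) *
        (ePoly x : R⟦X⟧) := by rw [h3]; ring
    _ = _ := by rw [h2]; ring

open PowerSeries in
/-- The `e`-expansion of the chromatic function of a path. -/
lemma pathTot_eq_wSum (x : ι → R) (n : ℕ) : pathTot x n = wSum (eFin x) n := by
  set E : R⟦X⟧ := (ePoly x : R⟦X⟧) with hE
  set D : R⟦X⟧ := X * (Polynomial.derivative (ePoly x) : R⟦X⟧) with hD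
  have hcE : ∀ n, coeff n E = eFin x n := fun n => by rw [hE, Polynomial.coeff_coe, eFin]
  have hcD : ∀ n, coeff n D = n * eFin x n := coeff_X_derivative x
  have hP : PowerSeries.mk (pathTot x) * (E - D) = E := pathTot_mul x
  have hV : PowerSeries.mk (vSum (eFin x)) * (E - D) = 1 := by
    ext n
    rcases n with _ | n
    · rw [coeff_mul]
      simp [hcE, hcD, eFin_zero, vSum_zero]
    · rw [mul_comm, coeff_mul, Finset.Nat.sum_antidiagonal_eq_sum_range_succ
        fun i j => coeff i (E - D) * coeff j (PowerSeries.mk (vSum (eFin x))),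
        Finset.sum_range_succ']
      simp only [map_sub, hcE, hcD, coeff_mk, coeff_one]
      rw [if_neg (by omega), Nat.cast_zero, zero_mul, sub_zero, eFin_zero, one_mul, Nat.sub_zero,
        vSum_succ, Fin.sum_univ_eq_sum_range fun i =>
          (i : R) * eFin x (i + 1) * vSum (eFin x) (n - i), ← Finset.sum_add_distrib]
      refine Finset.sum_eq_zero fun i _ => ?_
      rw [Nat.add_sub_add_right]
      push_cast; ring
  have hW : PowerSeries.mk (wSum (eFin x)) = 1 + D * PowerSeries.mk (vSum (eFin x)) := by
    ext n
    rcases n with _ | n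
    · simp [wSum_zero, hD]
    · rw [map_add, coeff_mul, Finset.Nat.sum_antidiagonal_eq_sum_range_succ
        fun i j => coeff i D * coeff j (PowerSeries.mk (vSum (eFin x))),
        Finset.sum_range_succ']
      simp only [hcD, coeff_mk, coeff_one]
      rw [if_neg (by omega), wSum_succ, Fin.sum_univ_eq_sum_range fun i =>
          ((i : R) + 1) * eFin x (i + 1) * vSum (eFin x) (n - i)]
      simp
  have : PowerSeries.mk (pathTot x) = PowerSeries.mk (wSum (eFin x)) := by
    calc PowerSeries.mk (pathTot x) =
          PowerSeries.mk (pathTot x) * (PowerSeries.mk (vSum (eFin x)) * (E - D)) := by rw [hV, mul_one]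
      _ = PowerSeries.mk (vSum (eFin x)) * (PowerSeries.mk (pathTot x) * (E - D)) := by ring
      _ = PowerSeries.mk (vSum (eFin x)) * (E - D) + D * PowerSeries.mk (vSum (eFin x)) := by
        rw [hP]; ring
      _ = _ := by rw [hV, hW]
  simpa using congrArg (coeff n) this

/-- The `e`-expansion of the chromatic function of a tadpole, in finitely many variables. -/
lemma tadSum_eq_wTheta (x : ι → R) (k l : ℕ) :
    tadSum x k l = wTheta (eFin x) (k + 1 + l) (l + 1) := by
  induction k using Nat.strong_induction_on generalizing l with
  | _ k ih =>
    rcases k with _ | k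
    · rw [tadSum_zero, zero_add, add_comm 1 l, wTheta_self]
    · have h := wTheta_sub (eFin x) (k + l + 2) (l + 1) (by omega) (by omega)
      rw [tadSum_succ, ih k (by omega), ih k (by omega), pathTot_eq_wSum, pathTot_eq_wSum,
        show k + 1 + 1 + l = k + l + 2 by ring, show k + 1 + (l + 1) = k + l + 2 by ring]
      rw [show k + l + 2 - (l + 1) = k + 1 by omega] at h
      rw [zero_add]
      linear_combination -h

end Paths

/-! ### Reduction to finitely many variables -/

section Truncation

/-- Passing to the variables `x_0, …, x_{N-1}`: monomials in these variables have the same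
coefficient in `e_k` and in its finite version. -/
lemma coeff_esymm (N k : ℕ) (d : ℕ →₀ ℕ) (hd : d.support ⊆ Finset.range N) :
    MvPowerSeries.coeff d (esymm k) =
      MvPowerSeries.coeff d (eFin (fun i : Fin N => (MvPowerSeries.X (i : ℕ) : SymF)) k) := by
  classical
  have hmon : ∀ t : Finset (Fin N), ∏ c ∈ t, (MvPowerSeries.X (c : ℕ) : SymF) =
      MvPowerSeries.monomial (∑ c ∈ t, Finsupp.single (c : ℕ) 1) 1 := by
    intro t
    induction t using Finset.induction_on with
    | empty => simp [MvPowerSeries.monomial_zero_one]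
    | insert a t ha ih =>
      rw [Finset.prod_insert ha, Finset.sum_insert ha, ih, MvPowerSeries.X_def,
        MvPowerSeries.monomial_mul_monomial, one_mul]
  have happ : ∀ (t : Finset (Fin N)) (i : Fin N),
      (∑ c ∈ t, Finsupp.single (c : ℕ) 1 : ℕ →₀ ℕ) i = if i ∈ t then 1 else 0 := by
    intro t i
    simp [Finsupp.finsetSum_apply, Finsupp.single_apply, Fin.val_inj]
  have happ' : ∀ (t : Finset (Fin N)) (i : ℕ), N ≤ i →
      (∑ c ∈ t, Finsupp.single (c : ℕ) 1 : ℕ →₀ ℕ) i = 0 := by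
    intro t i hi
    rw [Finsupp.finsetSum_apply]
    refine Finset.sum_eq_zero fun c _ => Finsupp.single_eq_of_ne ?_
    omega
  have hd0 : ∀ i, N ≤ i → d i = 0 := by
    intro i hi
    by_contra h
    have := Finset.mem_range.1 (hd (Finsupp.mem_support_iff.2 h))
    omega
  have hsum : (d.sum fun _ e => e) = ∑ i : Fin N, d i := by
    rw [Finsupp.sum_of_support_subset d hd _ (by simp), Fin.sum_univ_eq_sum_range]
  -- the only subset that can contribute to the coefficient of `d`
  set t₀ : Finset (Fin N) := Finset.univ.filter fun i => d i = 1 with ht₀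
  have key : ∀ t : Finset (Fin N), d = ∑ c ∈ t, Finsupp.single (c : ℕ) 1 ↔
      (∀ i, d i ≤ 1) ∧ t = t₀ := by
    intro t
    constructor
    · intro h
      have h1 : ∀ i : Fin N, d i = if i ∈ t then 1 else 0 := fun i => by
        conv_lhs => rw [h]
        exact happ t i
      refine ⟨fun i => ?_, ?_⟩
      · by_cases hi : i < N
        · have := h1 ⟨i, hi⟩
          simp only at this
          rw [this]; split_ifs <;> simp
        · rw [hd0 i (by omega)]; simp
      · ext i
        simp [ht₀, h1]
    · rintro ⟨h, rfl⟩
      ext i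
      by_cases hi : i < N
      · rw [happ t₀ ⟨i, hi⟩]
        have := h i
        simp only [ht₀, Finset.mem_filter, Finset.mem_univ, true_and]
        split_ifs <;> omega
      · rw [hd0 i (by omega), happ' _ i (by omega)]
  have hcard : (∀ i, d i ≤ 1) → t₀.card = ∑ i : Fin N, d i := by
    intro h
    rw [ht₀, Finset.card_filter]
    refine Finset.sum_congr rfl fun i _ => ?_
    have := h i
    split_ifs <;> omega
  rw [eFin_eq, map_sum]
  change (if (d.sum fun _ e => e) = k ∧ ∀ i, d i ≤ 1 then (1 : ℚ) else 0) = _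
  have hterm : ∀ t : Finset (Fin N), MvPowerSeries.coeff d
      (if t.card = k then ∏ c ∈ t, (MvPowerSeries.X (c : ℕ) : SymF) else 0) =
      if t = t₀ then (if t₀.card = k ∧ ∀ i, d i ≤ 1 then (1 : ℚ) else 0) else 0 := by
    intro t
    rw [hmon]
    by_cases h1 : t = t₀
    · rw [h1]
      by_cases h2 : t₀.card = k <;> by_cases h3 : ∀ i, d i ≤ 1 <;>
        simp [h2, h3, MvPowerSeries.coeff_monomial, key]
    · by_cases h2 : t.card = k <;> simp [h1, h2, MvPowerSeries.coeff_monomial, key]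
  simp only [hterm, Finset.sum_ite_eq', Finset.mem_univ, if_true]
  rw [hsum]
  by_cases h : ∀ i, d i ≤ 1
  · rw [hcard h]
  · simp [h]

lemma coeff_esymmProd (N : ℕ) (I : List ℕ) (d : ℕ →₀ ℕ) (hd : d.support ⊆ Finset.range N) :
    MvPowerSeries.coeff d (esymmProd I) = MvPowerSeries.coeff d
      (I.map (eFin (fun i : Fin N => (MvPowerSeries.X (i : ℕ) : SymF)))).prod := by
  classical
  unfold esymmProd
  induction I generalizing d with
  | nil => simp
  | cons h t ih =>
    rw [List.map_cons, List.map_cons, List.prod_cons, List.prod_cons, MvPowerSeries.coeff_mul,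
      MvPowerSeries.coeff_mul]
    refine Finset.sum_congr rfl fun p hp => ?_
    rw [Finset.HasAntidiagonal.mem_antidiagonal] at hp
    have h1 : p.1.support ⊆ d.support := Finsupp.support_mono (hp ▸ le_self_add)
    have h2 : p.2.support ⊆ d.support := Finsupp.support_mono (hp ▸ le_add_self)
    rw [coeff_esymm N h p.1 (h1.trans hd), ih p.2 (h2.trans hd)]

lemma tadpole_proper_iff {α : Type*} (k l : ℕ) (κ : Fin (k + 2 + l) → α) :
    (∀ v w, (tadpoleG (k + 2) l).Adj v w → κ v ≠ κ w) ↔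
      PathProper κ ∧ κ ⟨0, by omega⟩ ≠ κ ⟨k + 1, by omega⟩ := by
  constructor
  · intro h
    refine ⟨fun i hi => h _ _ ?_, h _ _ ?_⟩
    · rw [tadpoleG, SimpleGraph.fromRel_adj]
      exact ⟨by simp, by simp⟩
    · rw [tadpoleG, SimpleGraph.fromRel_adj]
      exact ⟨by simp, by simp⟩
  · rintro ⟨h1, h2⟩
    have key : ∀ v w : Fin (k + 2 + l),
        ((v : ℕ) + 1 = w ∨ ((v : ℕ) = 0 ∧ (w : ℕ) = k + 2 - 1)) → κ v ≠ κ w := by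
      rintro ⟨v, hv⟩ ⟨w, hw⟩ (h | ⟨h, h'⟩)
      · simp only at h
        subst h
        exact h1 v hw
      · simp only at h h'
        subst h h'
        exact h2
    intro v w hvw
    rw [tadpoleG, SimpleGraph.fromRel_adj] at hvw
    rcases hvw.2 with h | h
    · exact key v w h
    · exact (key w v h).symm

/-- Monomials in `x_0, …, x_{N-1}` have the same coefficient in the chromatic symmetric function
and in its version with finitely many colours. -/
lemma coeff_csf (N k l : ℕ) (d : ℕ →₀ ℕ) (hd : d.support ⊆ Finset.range N) :
    MvPowerSeries.coeff d (csf (tadpoleG (k + 2) l)) = MvPowerSeries.coeff d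
      (tadSum (fun i : Fin N => (MvPowerSeries.X (i : ℕ) : SymF)) (k + 1) l) := by
  classical
  set x : Fin N → SymF := fun i => MvPowerSeries.X (i : ℕ) with hx
  have hmon : ∀ κ : Fin (k + 2 + l) → Fin N, ∏ v, x (κ v) =
      MvPowerSeries.monomial (∑ v, Finsupp.single (κ v : ℕ) 1) 1 := by
    intro κ
    have : ∀ t : Finset (Fin (k + 2 + l)), ∏ v ∈ t, x (κ v) =
        MvPowerSeries.monomial (∑ v ∈ t, Finsupp.single (κ v : ℕ) 1) 1 := by
      intro t
      induction t using Finset.induction_on with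
      | empty => simp [MvPowerSeries.monomial_zero_one]
      | insert a t ha ih =>
        rw [Finset.prod_insert ha, Finset.sum_insert ha, ih]
        simp only [hx]
        rw [MvPowerSeries.X_def, MvPowerSeries.monomial_mul_monomial, one_mul]
    exact this _
  have hfib : ∀ κ : Fin (k + 2 + l) → Fin N, d = ∑ v, Finsupp.single (κ v : ℕ) 1 ↔
      ∀ i : ℕ, {v | (κ v : ℕ) = i}.ncard = d i := by
    intro κ
    rw [Finsupp.ext_iff]
    refine forall_congr' fun i => ?_
    have : {v | (κ v : ℕ) = i}.ncard = (∑ v, Finsupp.single (κ v : ℕ) 1 : ℕ →₀ ℕ) i := by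
      rw [Finsupp.finsetSum_apply, Set.ncard_eq_toFinset_card', Set.toFinset_ofPred,
        Finset.card_filter]
      simp [Finsupp.single_apply]
    rw [this, eq_comm]
  rw [← sum_tadpole, map_sum]
  let T : Finset (Fin (k + 2 + l) → Fin N) := Finset.univ.filter fun κ =>
    (PathProper κ ∧ κ ⟨0, by omega⟩ ≠ κ ⟨k + 1, by omega⟩) ∧
      ∀ i : ℕ, {v | (κ v : ℕ) = i}.ncard = d i
  have hset : {κ : Fin (k + 2 + l) → ℕ | (∀ v w, (tadpoleG (k + 2) l).Adj v w → κ v ≠ κ w) ∧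
        ∀ i : ℕ, {v | κ v = i}.ncard = d i} =
        (fun (κ : Fin (k + 2 + l) → Fin N) v => (κ v : ℕ)) ''
          (T : Set (Fin (k + 2 + l) → Fin N)) := by
    ext κ
    constructor
    · rintro ⟨h1, h2⟩
      have hlt : ∀ v, κ v < N := by
        intro v
        refine Finset.mem_range.1 (hd (Finsupp.mem_support_iff.2 ?_))
        rw [← h2]
        have hne : {w | κ w = κ v}.Nonempty := ⟨v, rfl⟩
        exact ((Set.ncard_pos (Set.toFinite _)).2 hne).ne'
      refine ⟨fun v => ⟨κ v, hlt v⟩, ?_, rfl⟩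
      rw [Finset.mem_coe, Finset.mem_filter]
      refine ⟨Finset.mem_univ _, ?_, h2⟩
      rw [← tadpole_proper_iff]
      intro v w hvw h
      exact h1 v w hvw (congrArg Fin.val h)
    · rintro ⟨κ', h, rfl⟩
      rw [Finset.mem_coe, Finset.mem_filter, ← tadpole_proper_iff] at h
      exact ⟨fun v w hvw heq => h.2.1 v w hvw (Fin.ext heq), h.2.2⟩
  change (({κ : Fin (k + 2 + l) → ℕ | (∀ v w, (tadpoleG (k + 2) l).Adj v w → κ v ≠ κ w) ∧
        ∀ i : ℕ, {v | κ v = i}.ncard = d i}).ncard : ℚ) = _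
  rw [hset, Set.ncard_image_of_injective _ (fun κ κ' h => funext fun v =>
    Fin.ext (congrFun h v)), Set.ncard_coe_finset, Finset.card_filter, Nat.cast_sum]
  refine Finset.sum_congr rfl fun κ _ => ?_
  unfold pathWt
  rw [hmon, ← hfib κ]
  by_cases h1 : PathProper κ <;>
    by_cases h2 : κ ⟨0, by omega⟩ = κ ⟨k + 1, by omega⟩ <;>
      simp only [h1, h2, ne_eq, not_true_eq_false, not_false_eq_true, and_true, and_false,
        true_and, false_and, if_true, if_false] <;>
      simp [MvPowerSeries.coeff_monomial]

end Truncation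

/-- For `0 ≤ l ≤ n - 2`,
`X_{T_{n-l, l}} = Σ_{I ⊨ n} Θ_I^+(l+1) w_I e_I`. -/
theorem stmt_10 (n l : ℕ) (h : l + 2 ≤ n) :
    csf (tadpoleG (n - l) l) =
      ∑ I : Composition n,
        ((thetaPlus I.blocks (l + 1) * wC I.blocks : ℕ) : ℚ) • esymmProd I.blocks := by
  obtain ⟨k, rfl⟩ : ∃ k, n = k + 2 + l := ⟨n - 2 - l, by omega⟩
  rw [Nat.add_sub_cancel]
  ext d
  obtain ⟨N, hN⟩ := Finset.exists_nat_subset_range d.support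
  rw [coeff_csf N k l d hN, tadSum_eq_wTheta, wTheta, map_sum, map_sum]
  refine Finset.sum_congr rfl fun I _ => ?_
  rw [MvPowerSeries.coeff_smul, coeff_esymmProd N _ d hN, ← nsmul_eq_mul, map_nsmul,
    nsmul_eq_mul]
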